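/- Assume l0, l1, l2, l3 ∈ ℤ_{≥0} with l3 = 0 and l0 ≥ l1 + l2 − 1, and let e1 > e3 > e2 be real numbers with e1+e2+e3 = 0 (corresponding to a purely imaginary modulus τ ∈ iℝ_{>0}). Then all the zeros of the spectral polynomial Q^{(l0,l1,l2,l3)}(E) are real and unequal. -/

import Mathlib

open Polynomial

/-- The polynomial `q(E) = −(E/4 − e1(ã2+ã3)² − e2(ã1+ã3)² − e3(ã1+ã2)² + e3·α·β)`,
where `α = ã0+ã1+ã2+ã3` and `β = −ã0+1/2+ã1+ã2+ã3`. -/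
noncomputable def heunQE (e1 e2 e3 a0 a1 a2 a3 : ℝ) : Polynomial ℝ :=
  Polynomial.C (e1 * (a2 + a3) ^ 2 + e2 * (a1 + a3) ^ 2 + e3 * (a1 + a2) ^ 2
      - e3 * ((a0 + a1 + a2 + a3) * (-a0 + 1 / 2 + a1 + a2 + a3)))
    - Polynomial.C (1 / 4 : ℝ) * Polynomial.X

/-- The coefficients `c_m` (polynomials in `E`) of the local Heun solution at `e3`, defined by
`c_0 = 1`, `(e1−e3)(e2−e3)γ3 c_1 = q(E)`, and for `m ≥ 1`
`(e1−e3)(e2−e3)(m+1)(m+γ3) c_{m+1} = −(m−1+α)(m−1+β) c_{m−1}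
  + [m((m−1+γ3)(e1+e2−2e3) + (e2−e3)γ1 + (e1−e3)γ2) + q(E)] c_m`,
with `γ_i = 2ã_i + 1/2`, `α = ã0+ã1+ã2+ã3`, `β = −ã0+1/2+ã1+ã2+ã3`. -/
noncomputable def heunC (e1 e2 e3 a0 a1 a2 a3 : ℝ) : ℕ → Polynomial ℝ
  | 0 => 1
  | 1 => Polynomial.C (((e1 - e3) * (e2 - e3) * (2 * a3 + 1 / 2))⁻¹)
      * heunQE e1 e2 e3 a0 a1 a2 a3
  | m + 2 =>
      Polynomial.C (((e1 - e3) * (e2 - e3) * ((m : ℝ) + 2) * ((m : ℝ) + 1 + (2 * a3 + 1 / 2)))⁻¹) *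
        (Polynomial.C (-(((m : ℝ) + (a0 + a1 + a2 + a3))
              * ((m : ℝ) + (-a0 + 1 / 2 + a1 + a2 + a3))))
            * heunC e1 e2 e3 a0 a1 a2 a3 m
          + (Polynomial.C (((m : ℝ) + 1) * (((m : ℝ) + (2 * a3 + 1 / 2)) * (e1 + e2 - 2 * e3)
                + (e2 - e3) * (2 * a1 + 1 / 2) + (e1 - e3) * (2 * a2 + 1 / 2)))
              + heunQE e1 e2 e3 a0 a1 a2 a3) * heunC e1 e2 e3 a0 a1 a2 a3 (m + 1))

/-- `P_{ã0,ã1,ã2,ã3}(E)`: the monic normalization of `c_{N+1}(E)`,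
where `N = −(ã0+ã1+ã2+ã3)`. -/
noncomputable def specP (e1 e2 e3 a0 a1 a2 a3 : ℝ) (N : ℕ) : Polynomial ℝ :=
  Polynomial.C ((heunC e1 e2 e3 a0 a1 a2 a3 (N + 1)).leadingCoeff)⁻¹ *
    heunC e1 e2 e3 a0 a1 a2 a3 (N + 1)

/-- The factor `P⁽⁰⁾(E)` of the spectral polynomial. -/
noncomputable def specP0 (e1 e2 e3 : ℝ) (l0 l1 l2 l3 : ℕ) : Polynomial ℝ :=
  if (l0 + l1 + l2 + l3) % 2 = 0 then
    specP e1 e2 e3 (-(l0 : ℝ) / 2) (-(l1 : ℝ) / 2) (-(l2 : ℝ) / 2) (-(l3 : ℝ) / 2)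
      ((l0 + l1 + l2 + l3) / 2)
  else if l1 + l2 + l3 + 3 ≤ l0 then
    specP e1 e2 e3 (-(l0 : ℝ) / 2) (((l1 : ℝ) + 1) / 2) (((l2 : ℝ) + 1) / 2) (((l3 : ℝ) + 1) / 2)
      ((l0 - l1 - l2 - l3 - 3) / 2)
  else if l0 = l1 + l2 + l3 + 1 then 1
  else
    specP e1 e2 e3 (((l0 : ℝ) + 1) / 2) (-(l1 : ℝ) / 2) (-(l2 : ℝ) / 2) (-(l3 : ℝ) / 2)
      ((l1 + l2 + l3 - l0 - 1) / 2)

/-- The factor `P⁽¹⁾(E)` of the spectral polynomial. -/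
noncomputable def specP1 (e1 e2 e3 : ℝ) (l0 l1 l2 l3 : ℕ) : Polynomial ℝ :=
  if (l0 + l1 + l2 + l3) % 2 = 0 then
    if l2 + l3 + 2 ≤ l0 + l1 then
      specP e1 e2 e3 (-(l0 : ℝ) / 2) (-(l1 : ℝ) / 2) (((l2 : ℝ) + 1) / 2) (((l3 : ℝ) + 1) / 2)
        ((l0 + l1 - l2 - l3) / 2 - 1)
    else if l0 + l1 = l2 + l3 then 1
    else
      specP e1 e2 e3 (((l0 : ℝ) + 1) / 2) (((l1 : ℝ) + 1) / 2) (-(l2 : ℝ) / 2) (-(l3 : ℝ) / 2)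
        ((l2 + l3 - l0 - l1) / 2 - 1)
  else
    if l0 + l2 + l3 + 3 ≤ l1 then
      specP e1 e2 e3 (((l0 : ℝ) + 1) / 2) (-(l1 : ℝ) / 2) (((l2 : ℝ) + 1) / 2) (((l3 : ℝ) + 1) / 2)
        ((l1 - l0 - l2 - l3 - 3) / 2)
    else if l1 = l0 + l2 + l3 + 1 then 1
    else
      specP e1 e2 e3 (-(l0 : ℝ) / 2) (((l1 : ℝ) + 1) / 2) (-(l2 : ℝ) / 2) (-(l3 : ℝ) / 2)
        ((l0 + l2 + l3 - l1 - 1) / 2)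

/-- The factor `P⁽²⁾(E)` of the spectral polynomial. -/
noncomputable def specP2 (e1 e2 e3 : ℝ) (l0 l1 l2 l3 : ℕ) : Polynomial ℝ :=
  if (l0 + l1 + l2 + l3) % 2 = 0 then
    if l1 + l3 + 2 ≤ l0 + l2 then
      specP e1 e2 e3 (-(l0 : ℝ) / 2) (((l1 : ℝ) + 1) / 2) (-(l2 : ℝ) / 2) (((l3 : ℝ) + 1) / 2)
        ((l0 + l2 - l1 - l3) / 2 - 1)
    else if l0 + l2 = l1 + l3 then 1
    else
      specP e1 e2 e3 (((l0 : ℝ) + 1) / 2) (-(l1 : ℝ) / 2) (((l2 : ℝ) + 1) / 2) (-(l3 : ℝ) / 2)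
        ((l1 + l3 - l0 - l2) / 2 - 1)
  else
    if l0 + l1 + l3 + 3 ≤ l2 then
      specP e1 e2 e3 (((l0 : ℝ) + 1) / 2) (((l1 : ℝ) + 1) / 2) (-(l2 : ℝ) / 2) (((l3 : ℝ) + 1) / 2)
        ((l2 - l0 - l1 - l3 - 3) / 2)
    else if l2 = l0 + l1 + l3 + 1 then 1
    else
      specP e1 e2 e3 (-(l0 : ℝ) / 2) (-(l1 : ℝ) / 2) (((l2 : ℝ) + 1) / 2) (-(l3 : ℝ) / 2)
        ((l0 + l1 + l3 - l2 - 1) / 2)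

/-- The factor `P⁽³⁾(E)` of the spectral polynomial. -/
noncomputable def specP3 (e1 e2 e3 : ℝ) (l0 l1 l2 l3 : ℕ) : Polynomial ℝ :=
  if (l0 + l1 + l2 + l3) % 2 = 0 then
    if l1 + l2 + 2 ≤ l0 + l3 then
      specP e1 e2 e3 (-(l0 : ℝ) / 2) (((l1 : ℝ) + 1) / 2) (((l2 : ℝ) + 1) / 2) (-(l3 : ℝ) / 2)
        ((l0 + l3 - l1 - l2) / 2 - 1)
    else if l0 + l3 = l1 + l2 then 1
    else
      specP e1 e2 e3 (((l0 : ℝ) + 1) / 2) (-(l1 : ℝ) / 2) (-(l2 : ℝ) / 2) (((l3 : ℝ) + 1) / 2)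
        ((l1 + l2 - l0 - l3) / 2 - 1)
  else
    if l0 + l1 + l2 + 3 ≤ l3 then
      specP e1 e2 e3 (((l0 : ℝ) + 1) / 2) (((l1 : ℝ) + 1) / 2) (((l2 : ℝ) + 1) / 2) (-(l3 : ℝ) / 2)
        ((l3 - l0 - l1 - l2 - 3) / 2)
    else if l3 = l0 + l1 + l2 + 1 then 1
    else
      specP e1 e2 e3 (-(l0 : ℝ) / 2) (-(l1 : ℝ) / 2) (-(l2 : ℝ) / 2) (((l3 : ℝ) + 1) / 2)
        ((l0 + l1 + l2 - l3 - 1) / 2)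

/-- The spectral polynomial `Q^{(l0,l1,l2,l3)}(E) = P⁽⁰⁾P⁽¹⁾P⁽²⁾P⁽³⁾` of the
Treibich-Verdier operator `H^{(l0,l1,l2,l3)}`. -/
noncomputable def specQ (e1 e2 e3 : ℝ) (l0 l1 l2 l3 : ℕ) : Polynomial ℝ :=
  specP0 e1 e2 e3 l0 l1 l2 l3 * specP1 e1 e2 e3 l0 l1 l2 l3 *
    specP2 e1 e2 e3 l0 l1 l2 l3 * specP3 e1 e2 e3 l0 l1 l2 l3

/-!
Each factor of `Q` is a multiple of a term `c (N + 1)` of a three-term recurrence whose slopes and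
coupling constants are positive up to index `N`. Hence its Christoffel–Darboux kernel is positive at
every pair `(z, conj z)`, which forces real roots, and on the real diagonal, where it is the
Wronskian of two consecutive terms, which forces simple roots.

That two factors have no common root is seen on the Heun equation. A root of `c (N + 1)` makes the
local Heun series terminate, so at a common root both Heun equations have polynomial solutions `p`
and `q`. The exponents of the two equations agree or are reflected (`a ↦ 1 / 2 - a`) at each
singular point, so the equations are related by the gauge factor `g = ∏ (X - t i) ^ c i` with
`c i ∈ {0, 1 / 2 - 2 * a i}`. By Abel's identity the Wronskian of `p` and `g q`, cleared of `g` and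
denominators, is a polynomial `W` with logarithmic derivative `∑ (1 - γ i - c i) / (X - t i)`. If
`W = 0` then all `c i` are integers, otherwise all `1 - γ i - c i` are. But `1 / 2 - 2 * a i` is
never an integer; it occurs among the `c i` where the exponents are reflected, and among the
`1 - γ i - c i` where they agree, and two factors exhibit both behaviours at the finite singular
points.
-/

section RealRoots

theorem isCoprime_of_splits {K : Type*} [Field K] {f g : K[X]} (hf : f.Splits) (hf0 : f ≠ 0)
    (h : ∀ x, f.eval x = 0 → g.eval x ≠ 0) : IsCoprime f g := by
  classical
  have hgcd : (EuclideanDomain.gcd f g).Splits := hf.of_dvd hf0 (EuclideanDomain.gcd_dvd_left f g)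
  rw [← EuclideanDomain.gcd_isUnit_iff, isUnit_iff_degree_eq_zero]
  by_contra hdeg
  obtain ⟨x, hx⟩ := hgcd.exists_eval_eq_zero hdeg
  obtain ⟨hfx, hgx⟩ := isRoot_gcd_iff_isRoot_left_right.1 hx
  exact h x hfx hgx

theorem splits_of_forall_im_eq_zero {f : ℝ[X]} (h : ∀ z : ℂ, aeval z f = 0 → z.im = 0) :
    f.Splits := by
  refine Splits.of_splits_map (algebraMap ℝ ℂ) (IsAlgClosed.splits _) fun z hz ↦ ?_
  have hz0 : aeval z f = 0 := by simpa [eval_map_algebraMap] using (mem_roots'.1 hz).2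
  exact ⟨z.re, Complex.conj_eq_iff_re.1 (Complex.conj_eq_iff_im.2 (h z hz0))⟩

theorem im_eq_zero_of_mem_roots_map {f : ℝ[X]} (hf : f.Splits) {z : ℂ}
    (hz : z ∈ (f.map (algebraMap ℝ ℂ)).roots) : z.im = 0 := by
  rw [hf.roots_map, Multiset.mem_map] at hz
  obtain ⟨x, -, rfl⟩ := hz
  exact Complex.ofReal_im x

end RealRoots

section ThreeTerm

/-- The polynomials `P m` are generated from `P 0 = 1` by a three-term recurrence with slopes `s`,
shifts `b` and coupling constants `d`. For positive `s` and `d` these are, by Favard's theorem, the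
orthogonal polynomials of some measure. -/
structure IsThreeTermSequence {R : Type*} [CommRing R] (P : ℕ → R[X]) (s b d : ℕ → R) :
    Prop where
  zero : P 0 = 1
  one : P 1 = C (s 0) * X + C (b 0)
  succ_succ (m : ℕ) : P (m + 2) = (C (s (m + 1)) * X + C (b (m + 1))) * P (m + 1) - C (d m) * P m

/-- The Christoffel–Darboux kernel `∑_{k ≤ n} s k (∏_{k ≤ j < n} d j) P k (u) P k (v)` of a
three-term sequence, accumulated recursively. -/
noncomputable def christoffelDarboux {R A : Type*} [CommRing R] [CommRing A] [Algebra R A]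
    (P : ℕ → R[X]) (s d : ℕ → R) (u v : A) : ℕ → A
  | 0 => s 0 • (aeval u (P 0) * aeval v (P 0))
  | n + 1 => s (n + 1) • (aeval u (P (n + 1)) * aeval v (P (n + 1))) +
      d n • christoffelDarboux P s d u v n

namespace IsThreeTermSequence

variable {R : Type*} [CommRing R] {P : ℕ → R[X]} {s b d : ℕ → R}

theorem christoffelDarboux_identity {A : Type*} [CommRing A] [Algebra R A]
    (h : IsThreeTermSequence P s b d) (u v : A) (n : ℕ) :
    aeval u (P (n + 1)) * aeval v (P n) - aeval u (P n) * aeval v (P (n + 1)) =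
      (u - v) * christoffelDarboux P s d u v n := by
  induction n with
  | zero =>
    simp only [christoffelDarboux, h.zero, h.one, zero_add, map_add, map_mul, map_one, aeval_C,
      aeval_X, Algebra.smul_def]
    ring
  | succ n ih =>
    simp only [christoffelDarboux, h.succ_succ, map_add, map_sub, map_mul, aeval_C, aeval_X,
      Algebra.smul_def]
    linear_combination algebraMap R A (d n) * ih

theorem eval_wronskian (h : IsThreeTermSequence P s b d) (x : R) (n : ℕ) :
    (wronskian (P n) (P (n + 1))).eval x = christoffelDarboux P s d x x n := by
  induction n with
  | zero => simp [wronskian, christoffelDarboux, h.zero, h.one]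
  | succ n ih =>
    simp only [wronskian, eval_sub, eval_mul] at ih
    simp only [wronskian, christoffelDarboux, h.succ_succ, derivative_sub, derivative_mul,
      derivative_add, derivative_C, derivative_X, eval_sub, eval_mul, eval_add, eval_C, eval_X,
      eval_zero, eval_one, coe_aeval_eq_eval, smul_eq_mul]
    linear_combination d n * ih

theorem eval_eq_zero_of_lt (h : IsThreeTermSequence P s b d) {N : ℕ} (hd : d N = 0) {x : R}
    (hx : (P (N + 1)).eval x = 0) : ∀ m, N < m → (P m).eval x = 0 := by
  intro m hm
  obtain ⟨k, rfl⟩ := Nat.exists_eq_add_of_le (Nat.succ_le_of_lt hm)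
  clear hm
  induction k using Nat.twoStepInduction with
  | zero => exact hx
  | one => simp [h.succ_succ N, hx, hd]
  | more k ih ih' =>
    rw [← add_assoc] at ih' ⊢
    simp [h.succ_succ, ih, ih']

end IsThreeTermSequence

open ComplexConjugate in
theorem re_christoffelDarboux_conj_pos {𝕜 : Type*} [RCLike 𝕜] {P : ℕ → ℝ[X]} {s d : ℕ → ℝ}
    (hP : P 0 = 1) (hs : ∀ m, 0 < s m) {n : ℕ} (hd : ∀ m < n, 0 < d m) (z : 𝕜) :
    0 < RCLike.re (christoffelDarboux P s d z (conj z) n) := by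
  induction n with
  | zero => simpa [christoffelDarboux, hP, RCLike.smul_re] using hs 0
  | succ n ih =>
    have hdiag : aeval z (P (n + 1)) * aeval (conj z) (P (n + 1)) =
        ((‖aeval z (P (n + 1))‖ ^ 2 : ℝ) : 𝕜) := by
      rw [aeval_conj, RCLike.mul_conj, RCLike.ofReal_pow]
    rw [christoffelDarboux, map_add, RCLike.smul_re, RCLike.smul_re, hdiag, RCLike.ofReal_re]
    have hprev := ih fun m hm ↦ hd m (hm.trans n.lt_succ_self)
    exact add_pos_of_nonneg_of_pos (mul_nonneg (hs _).le (sq_nonneg _))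
      (mul_pos (hd n n.lt_succ_self) hprev)

namespace IsThreeTermSequence

variable {P : ℕ → ℝ[X]} {s b d : ℕ → ℝ} {N : ℕ}

theorem splits_succ (h : IsThreeTermSequence P s b d) (hs : ∀ m, 0 < s m)
    (hd : ∀ m < N, 0 < d m) : (P (N + 1)).Splits := by
  refine splits_of_forall_im_eq_zero fun z hz ↦ ?_
  have hker := re_christoffelDarboux_conj_pos h.zero hs hd z
  have hid := h.christoffelDarboux_identity z (starRingEnd ℂ z) N
  have hzero : (z - starRingEnd ℂ z) * christoffelDarboux P s d z (starRingEnd ℂ z) N = 0 := by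
    rw [← hid, aeval_conj, aeval_conj, hz]
    simp
  rcases mul_eq_zero.1 hzero with hreal | hker0
  · exact Complex.conj_eq_iff_im.1 (sub_eq_zero.1 hreal).symm
  · simp [hker0] at hker

theorem eval_wronskian_pos (h : IsThreeTermSequence P s b d) (hs : ∀ m, 0 < s m)
    (hd : ∀ m < N, 0 < d m) (x : ℝ) : 0 < (wronskian (P N) (P (N + 1))).eval x := by
  rw [h.eval_wronskian]
  simpa using re_christoffelDarboux_conj_pos h.zero hs hd x

theorem separable_succ (h : IsThreeTermSequence P s b d) (hs : ∀ m, 0 < s m)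
    (hd : ∀ m < N, 0 < d m) : (P (N + 1)).Separable := by
  have hW := h.eval_wronskian_pos hs hd
  refine isCoprime_of_splits (h.splits_succ hs hd) (fun h0 ↦ ?_) fun x hx hx' ↦ (hW x).ne' ?_
  · simpa [h0] using hW 0
  · simp [wronskian, hx, hx']

end IsThreeTermSequence

end ThreeTerm

section LogarithmicDerivative

open Finset Lagrange

variable {R : Type*} [CommRing R]

theorem exists_X_sub_C_mul_derivative_eq [Nontrivial R] {p : R[X]} (hp : p ≠ 0) (t : R) :
    ∃ u v : R[X], p = (X - C t) ^ p.rootMultiplicity t * u ∧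
      (X - C t) * derivative p = (X - C t) ^ p.rootMultiplicity t * v ∧
      u.eval t ≠ 0 ∧ v.eval t = p.rootMultiplicity t * u.eval t := by
  obtain ⟨u, hpu, hu⟩ := exists_eq_pow_rootMultiplicity_mul_and_not_dvd p hp t
  set n := p.rootMultiplicity t
  refine ⟨u, C (n : R) * u + (X - C t) * derivative u, hpu, ?_, fun h ↦ hu (dvd_iff_isRoot.2 h),
    by simp⟩
  rw [hpu, derivative_mul, derivative_X_sub_C_pow]
  rcases n with - | n
  · simp
  · simp only [C_eq_natCast, Nat.add_sub_cancel]
    ring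

/-- The numerator of `∑ i, r i / (X - t i)` over the common denominator `∏ i, (X - t i)`. -/
noncomputable def polarNumerator {ι : Type*} [Fintype ι] [DecidableEq ι] (t : ι → R) :
    (ι → R) →ₗ[R] R[X] :=
  Fintype.linearCombination R fun i ↦ nodal (univ.erase i) t

variable {ι : Type*} [Fintype ι] [DecidableEq ι] {t : ι → R}

theorem polarNumerator_apply (r : ι → R) :
    polarNumerator t r = ∑ i, C (r i) * nodal (univ.erase i) t := by
  simp [polarNumerator, Fintype.linearCombination_apply, smul_eq_C_mul]

theorem polarNumerator_one : polarNumerator t 1 = derivative (nodal univ t) := by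
  simp [polarNumerator_apply, derivative_nodal]

theorem eval_polarNumerator_node (r : ι → R) (i : ι) :
    (polarNumerator t r).eval (t i) = r i * (nodal (univ.erase i) t).eval (t i) := by
  rw [polarNumerator_apply, eval_finsetSum, sum_eq_single i]
  · simp
  · intro j _ hji
    rw [eval_mul, eval_nodal_at_node (mem_erase.2 ⟨hji.symm, mem_univ i⟩), mul_zero]
  · simp

theorem residue_eq_of_wronskian_eq_zero [IsDomain R] (ht : Function.Injective t) {p q : R[X]}
    (hp : p ≠ 0) (hq : q ≠ 0) {r : ι → R}
    (h : nodal univ t * wronskian p q + polarNumerator t r * (p * q) = 0) (i : ι) :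
    r i = p.rootMultiplicity (t i) - q.rootMultiplicity (t i) := by
  obtain ⟨u, u', hpu, hpu', hu, hu'⟩ := exists_X_sub_C_mul_derivative_eq hp (t i)
  obtain ⟨v, v', hqv, hqv', hv, hv'⟩ := exists_X_sub_C_mul_derivative_eq hq (t i)
  generalize p.rootMultiplicity (t i) = m at *
  generalize q.rootMultiplicity (t i) = n at *
  set Y := X - C (t i)
  set T := nodal (univ.erase i) t
  set G := polarNumerator t r
  have hT : nodal univ t = Y * T := nodal_eq_mul_nodal_erase (mem_univ i)
  have hfactor : Y ^ (m + n) * (T * (u * v' - u' * v) + G * (u * v)) = 0 := by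
    rw [hT, wronskian] at h
    rw [pow_add]
    linear_combination h - (T * Y ^ n * v' + G * q) * hpu + T * q * hpu' +
      (T * Y ^ m * u' - G * Y ^ m * u) * hqv - T * p * hqv'
  have hlead := (mul_eq_zero.1 hfactor).resolve_left (pow_ne_zero _ (X_sub_C_ne_zero _))
  have hT0 : T.eval (t i) ≠ 0 :=
    eval_nodal_not_at_node fun j hj ↦ ht.ne (ne_of_mem_erase hj).symm
  have heval : T.eval (t i) * (u.eval (t i) * v.eval (t i)) * (r i - (m - n)) = 0 := by
    have := congrArg (eval (t i)) hlead
    simp only [eval_add, eval_mul, eval_sub, eval_zero, hu', hv', G,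
      eval_polarNumerator_node] at this
    linear_combination this
  exact sub_eq_zero.1 ((mul_eq_zero.1 heval).resolve_left (mul_ne_zero hT0 (mul_ne_zero hu hv)))

theorem residue_eq_of_logDeriv [IsDomain R] (ht : Function.Injective t) {w : R[X]} (hw : w ≠ 0)
    {r : ι → R} (h : nodal univ t * derivative w = polarNumerator t r * w) (i : ι) :
    r i = w.rootMultiplicity (t i) := by
  have hone : (1 : R[X]).rootMultiplicity (t i) = 0 := rootMultiplicity_eq_zero (by simp)
  have := residue_eq_of_wronskian_eq_zero ht one_ne_zero hw (r := -r) (by simp [wronskian, h]) i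
  simpa [hone, neg_eq_iff_eq_neg] using this

end LogarithmicDerivative

section Fuchsian

open Finset Lagrange

variable {R : Type*} [CommRing R] {ι : Type*} [Fintype ι] [DecidableEq ι] {t γ c : ι → R}

/-- `p` solves the Fuchsian equation `p'' + (∑ i, γ i / (X - t i)) p' + V / ∏ i, (X - t i) p = 0`,
written with denominators cleared. -/
def SolvesFuchsian (t γ : ι → R) (V p : R[X]) : Prop :=
  nodal univ t * derivative (derivative p) + polarNumerator t γ * derivative p + V * p = 0

theorem nodal_mul_derivative_gauged_wronskian {p q V V' : R[X]} (hp : SolvesFuchsian t γ V p)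
    (hq : SolvesFuchsian t (γ + 2 • c) V' q)
    (hV : nodal univ t * (V - V' + derivative (polarNumerator t c)) =
      polarNumerator t (1 - γ - c) * polarNumerator t c) :
    nodal univ t * derivative (nodal univ t * wronskian p q + polarNumerator t c * (p * q)) =
      polarNumerator t (1 - γ - c) *
        (nodal univ t * wronskian p q + polarNumerator t c * (p * q)) := by
  simp only [SolvesFuchsian, map_add, map_nsmul, map_sub, polarNumerator_one] at hp hq hV ⊢
  simp only [wronskian, derivative_sub, derivative_mul]
  linear_combination (nodal univ t * p) * hq - (nodal univ t * q) * hp + p * q * hV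

theorem forall_exponent_integral [IsDomain R] (ht : Function.Injective t) {p q V V' : R[X]}
    (hp0 : p ≠ 0) (hq0 : q ≠ 0) (hp : SolvesFuchsian t γ V p)
    (hq : SolvesFuchsian t (γ + 2 • c) V' q)
    (hV : nodal univ t * (V - V' + derivative (polarNumerator t c)) =
      polarNumerator t (1 - γ - c) * polarNumerator t c) :
    (∀ i, ∃ n : ℤ, c i = n) ∨ ∀ i, ∃ n : ℤ, 1 - γ i - c i = n := by
  by_cases hW : nodal univ t * wronskian p q + polarNumerator t c * (p * q) = 0
  · exact .inl fun i ↦ ⟨p.rootMultiplicity (t i) - q.rootMultiplicity (t i), by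
      simpa using residue_eq_of_wronskian_eq_zero ht hp0 hq0 hW i⟩
  · exact .inr fun i ↦ ⟨rootMultiplicity (t i) _, by
      simpa using residue_eq_of_logDeriv ht hW
        (nodal_mul_derivative_gauged_wronskian hp hq hV) i⟩

end Fuchsian

section CoeffDerivative

variable {R : Type*} [CommRing R]

theorem coeff_X_mul_derivative (p : R[X]) (m : ℕ) :
    (X * derivative p).coeff m = m * p.coeff m := by
  cases m <;> simp [coeff_derivative, mul_comm]

theorem coeff_X_mul_X_mul_derivative_derivative (p : R[X]) (m : ℕ) :
    (X * (X * derivative (derivative p))).coeff m = m * (m - 1) * p.coeff m := by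
  rcases m with - | m
  · simp
  · rw [coeff_X_mul, coeff_X_mul_derivative, coeff_derivative]
    push_cast
    ring

end CoeffDerivative

section Heun

open Finset Lagrange

/-- The finite singular points of the Heun equation after moving `e₃` to the origin. -/
def heunNode (e1 e2 e3 : ℝ) : Fin 3 → ℝ := ![e1 - e3, e2 - e3, 0]

/-- The residues `γ₁, γ₂, γ₃` of the Heun equation with exponents `a`. -/
noncomputable def heunGamma (a : Fin 4 → ℝ) (i : Fin 3) : ℝ := 2 * a i.succ + 1 / 2

/-- The parameter `α` of the Heun equation with exponents `a`. -/
def heunAlpha (a : Fin 4 → ℝ) : ℝ := a 0 + a 1 + a 2 + a 3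

/-- The parameter `β` of the Heun equation with exponents `a`. -/
noncomputable def heunBeta (a : Fin 4 → ℝ) : ℝ := -a 0 + 1 / 2 + a 1 + a 2 + a 3

/-- The coefficients `c_m` of the local Heun solution, with the exponents packed in a vector. -/
noncomputable abbrev heunCoeff (e1 e2 e3 : ℝ) (a : Fin 4 → ℝ) : ℕ → ℝ[X] :=
  heunC e1 e2 e3 (a 0) (a 1) (a 2) (a 3)

/-- The accessory parameter `q(x)` of the Heun equation with spectral parameter `x`. -/
noncomputable def heunAccessory (e1 e2 e3 : ℝ) (a : Fin 4 → ℝ) (x : ℝ) : ℝ :=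
  (heunQE e1 e2 e3 (a 0) (a 1) (a 2) (a 3)).eval x

/-- The coefficient `αβ X - q(x)` of the undifferentiated term of the Heun equation. -/
noncomputable def heunPotential (e1 e2 e3 : ℝ) (a : Fin 4 → ℝ) (x : ℝ) : ℝ[X] :=
  C (heunAlpha a * heunBeta a) * X - C (heunAccessory e1 e2 e3 a x)

/-- The factor of `c_{m+1}` in the Heun recurrence. -/
noncomputable def heunLead (e1 e2 e3 : ℝ) (a : Fin 4 → ℝ) (m : ℕ) : ℝ :=
  (e1 - e3) * (e2 - e3) * (m + 1) * (m + heunGamma a 2)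

/-- The part of the factor of `c_m` in the Heun recurrence that does not involve `q`. -/
noncomputable def heunMid (e1 e2 e3 : ℝ) (a : Fin 4 → ℝ) (m : ℕ) : ℝ :=
  m * ((m - 1 + heunGamma a 2) * (e1 + e2 - 2 * e3) + (e2 - e3) * heunGamma a 0 +
    (e1 - e3) * heunGamma a 1)

/-- The factor of `c_m`, up to sign, in the Heun recurrence for `c_{m+2}`. -/
noncomputable def heunLow (a : Fin 4 → ℝ) (m : ℕ) : ℝ := (m + heunAlpha a) * (m + heunBeta a)

/-- The coefficient of the spectral parameter in the Heun recurrence solved for `c_{m+1}`. -/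
noncomputable def heunSlope (e1 e2 e3 : ℝ) (a : Fin 4 → ℝ) (m : ℕ) : ℝ :=
  -(heunLead e1 e2 e3 a m)⁻¹ * (1 / 4)

/-- The part of the coefficient of `c_m` in the Heun recurrence solved for `c_{m+1}` that does not
involve the spectral parameter. -/
noncomputable def heunShift (e1 e2 e3 : ℝ) (a : Fin 4 → ℝ) (m : ℕ) : ℝ :=
  (heunLead e1 e2 e3 a m)⁻¹ * (heunMid e1 e2 e3 a m + heunAccessory e1 e2 e3 a 0)

/-- The coefficient of `-c_m` in the Heun recurrence solved for `c_{m+2}`. -/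
noncomputable def heunCoupling (e1 e2 e3 : ℝ) (a : Fin 4 → ℝ) (m : ℕ) : ℝ :=
  (heunLead e1 e2 e3 a (m + 1))⁻¹ * heunLow a m

variable {e1 e2 e3 : ℝ} {a : Fin 4 → ℝ} {N : ℕ}

theorem heunQE_eq (e1 e2 e3 : ℝ) (a : Fin 4 → ℝ) :
    heunQE e1 e2 e3 (a 0) (a 1) (a 2) (a 3) =
      C (heunAccessory e1 e2 e3 a 0) - C (1 / 4) * X := by
  simp [heunAccessory, heunQE]

theorem heunAccessory_eq (e1 e2 e3 : ℝ) (a : Fin 4 → ℝ) (x : ℝ) :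
    heunAccessory e1 e2 e3 a x = heunAccessory e1 e2 e3 a 0 - x / 4 := by
  rw [heunAccessory, heunQE_eq]
  simp only [eval_sub, eval_mul, eval_C, eval_X]
  ring

theorem heunCoeff_isThreeTermSequence (e1 e2 e3 : ℝ) (a : Fin 4 → ℝ) :
    IsThreeTermSequence (heunCoeff e1 e2 e3 a) (heunSlope e1 e2 e3 a) (heunShift e1 e2 e3 a)
      (heunCoupling e1 e2 e3 a) where
  zero := by rw [heunCoeff, heunC]
  one := by
    rw [heunCoeff, heunC, heunQE_eq]
    simp only [heunSlope, heunShift, heunLead, heunMid, heunGamma, Fin.reduceSucc, Nat.cast_zero,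
      zero_add, mul_one, zero_mul, C_mul, C_neg]
    ring
  succ_succ m := by
    have hlead : heunLead e1 e2 e3 a (m + 1) =
        (e1 - e3) * (e2 - e3) * (m + 2) * (m + 1 + (2 * a 3 + 1 / 2)) := by
      simp only [heunLead, heunGamma, Fin.reduceSucc]
      push_cast
      ring
    have hmid : heunMid e1 e2 e3 a (m + 1) =
        (m + 1) * ((m + (2 * a 3 + 1 / 2)) * (e1 + e2 - 2 * e3)
          + (e2 - e3) * (2 * a 1 + 1 / 2) + (e1 - e3) * (2 * a 2 + 1 / 2)) := by
      simp only [heunMid, heunGamma, Fin.reduceSucc]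
      push_cast
      ring
    rw [heunCoeff, heunC, heunQE_eq, heunSlope, heunShift, heunCoupling, hlead, hmid]
    simp only [heunLow, heunAlpha, heunBeta, C_mul, C_neg, C_add]
    ring

theorem heunLead_neg (h13 : e3 < e1) (h32 : e2 < e3) (hγ : 0 < heunGamma a 2) (m : ℕ) :
    heunLead e1 e2 e3 a m < 0 := by
  have hAB : (e1 - e3) * (e2 - e3) < 0 := mul_neg_of_pos_of_neg (by linarith) (by linarith)
  exact mul_neg_of_neg_of_pos (mul_neg_of_neg_of_pos hAB (by positivity)) (by positivity)

theorem heunSlope_pos (h13 : e3 < e1) (h32 : e2 < e3) (hγ : 0 < heunGamma a 2) (m : ℕ) :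
    0 < heunSlope e1 e2 e3 a m := by
  have := inv_lt_zero.2 (heunLead_neg h13 h32 hγ m)
  rw [heunSlope]
  linarith

theorem heunCoupling_pos (h13 : e3 < e1) (h32 : e2 < e3) (hγ : 0 < heunGamma a 2)
    (hα : heunAlpha a = -N) (hβ : N = 0 ∨ 0 < heunBeta a) {m : ℕ} (hm : m < N) :
    0 < heunCoupling e1 e2 e3 a m := by
  have hmN : (m : ℝ) < N := Nat.cast_lt.2 hm
  have hβ' : 0 < heunBeta a := hβ.resolve_left (Nat.ne_zero_of_lt hm)
  exact mul_pos_of_neg_of_neg (inv_lt_zero.2 (heunLead_neg h13 h32 hγ _))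
    (mul_neg_of_neg_of_pos (by linarith) (by positivity))

theorem heunCoeff_succ_splits (h13 : e3 < e1) (h32 : e2 < e3) (hγ : 0 < heunGamma a 2)
    (hα : heunAlpha a = -N) (hβ : N = 0 ∨ 0 < heunBeta a) :
    (heunCoeff e1 e2 e3 a (N + 1)).Splits :=
  (heunCoeff_isThreeTermSequence e1 e2 e3 a).splits_succ (heunSlope_pos h13 h32 hγ)
    fun _ ↦ heunCoupling_pos h13 h32 hγ hα hβ

theorem heunCoeff_succ_separable (h13 : e3 < e1) (h32 : e2 < e3) (hγ : 0 < heunGamma a 2)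
    (hα : heunAlpha a = -N) (hβ : N = 0 ∨ 0 < heunBeta a) :
    (heunCoeff e1 e2 e3 a (N + 1)).Separable :=
  (heunCoeff_isThreeTermSequence e1 e2 e3 a).separable_succ (heunSlope_pos h13 h32 hγ)
    fun _ ↦ heunCoupling_pos h13 h32 hγ hα hβ

theorem nodal_heunNode (e1 e2 e3 : ℝ) :
    nodal univ (heunNode e1 e2 e3) = X * (X - C (e1 - e3)) * (X - C (e2 - e3)) := by
  simp [nodal, heunNode, Fin.prod_univ_three, mul_comm, mul_assoc]

theorem polarNumerator_heunNode (e1 e2 e3 : ℝ) (r : Fin 3 → ℝ) :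
    polarNumerator (heunNode e1 e2 e3) r = C (r 0) * (X * (X - C (e2 - e3))) +
      C (r 1) * (X * (X - C (e1 - e3))) + C (r 2) * ((X - C (e1 - e3)) * (X - C (e2 - e3))) := by
  have h0 : univ.erase (0 : Fin 3) = {1, 2} := by decide
  have h1 : univ.erase (1 : Fin 3) = {0, 2} := by decide
  have h2 : univ.erase (2 : Fin 3) = {0, 1} := by decide
  simp [polarNumerator_apply, Fin.sum_univ_three, h0, h1, h2, nodal, heunNode, mul_comm]

theorem solvesFuchsian_of_heun_recurrence {p : ℝ[X]} {x : ℝ}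
    (hzero : heunLead e1 e2 e3 a 0 * p.coeff 1 = heunAccessory e1 e2 e3 a x * p.coeff 0)
    (hsucc : ∀ m, heunLead e1 e2 e3 a (m + 1) * p.coeff (m + 2) =
      (heunMid e1 e2 e3 a (m + 1) + heunAccessory e1 e2 e3 a x) * p.coeff (m + 1) -
        heunLow a m * p.coeff m) :
    SolvesFuchsian (heunNode e1 e2 e3) (heunGamma a) (heunPotential e1 e2 e3 a x) p := by
  have hgroup : nodal univ (heunNode e1 e2 e3) * derivative (derivative p) +
      polarNumerator (heunNode e1 e2 e3) (heunGamma a) * derivative p +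
      heunPotential e1 e2 e3 a x * p =
      X * (X * (X * derivative (derivative p)) +
          C (heunGamma a 0 + heunGamma a 1 + heunGamma a 2) * (X * derivative p) +
          C (heunAlpha a * heunBeta a) * p) -
        (C (e1 + e2 - 2 * e3) * (X * (X * derivative (derivative p))) +
          C ((e1 + e2 - 2 * e3) * heunGamma a 2 + (e2 - e3) * heunGamma a 0 +
            (e1 - e3) * heunGamma a 1) * (X * derivative p) +
          C (heunAccessory e1 e2 e3 a x) * p) +
        C ((e1 - e3) * (e2 - e3)) * (X * derivative (derivative p) +
          C (heunGamma a 2) * derivative p) := by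
    rw [nodal_heunNode, polarNumerator_heunNode, heunPotential]
    simp only [C_add, C_sub, C_mul, C_ofNat]
    ring
  rw [SolvesFuchsian, hgroup]
  ext (- | m)
  · simp only [coeff_add, coeff_sub, coeff_C_mul, coeff_X_mul_zero, coeff_derivative, coeff_zero]
    simp only [heunLead] at hzero
    push_cast at hzero ⊢
    linear_combination hzero
  · simp only [coeff_add, coeff_sub, coeff_C_mul, coeff_X_mul, coeff_X_mul_derivative,
      coeff_X_mul_X_mul_derivative_derivative, coeff_derivative, coeff_zero]
    have hm := hsucc m
    simp only [heunLead, heunMid, heunLow, heunAlpha, heunBeta, heunGamma, Fin.reduceSucc] at hm ⊢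
    push_cast at hm ⊢
    linear_combination hm

theorem exists_solvesFuchsian_of_heunCoeff_eval_eq_zero
    (hlead : ∀ m, heunLead e1 e2 e3 a m ≠ 0) (hα : heunAlpha a = -N) {x : ℝ}
    (hx : (heunCoeff e1 e2 e3 a (N + 1)).eval x = 0) :
    ∃ p ≠ 0, SolvesFuchsian (heunNode e1 e2 e3) (heunGamma a) (heunPotential e1 e2 e3 a x) p := by
  have hP := heunCoeff_isThreeTermSequence e1 e2 e3 a
  let c (m : ℕ) : ℝ := (heunCoeff e1 e2 e3 a m).eval x
  have hc (m : ℕ) (hm : N < m) : c m = 0 :=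
    hP.eval_eq_zero_of_lt (by simp [heunCoupling, heunLow, hα]) hx m hm
  let p : ℝ[X] := ∑ m ∈ range (N + 1), C (c m) * X ^ m
  have hp (m : ℕ) : p.coeff m = c m := by
    simp only [p, finsetSum_coeff, coeff_C_mul_X_pow, Finset.sum_ite_eq, mem_range]
    split_ifs with hm
    · rfl
    · exact (hc m (by omega)).symm
  have hc0 : c 0 = 1 := by simp [c, hP.zero]
  refine ⟨p, fun h ↦ ?_, solvesFuchsian_of_heun_recurrence ?_ fun m ↦ ?_⟩
  · simpa [h, hc0] using hp 0
  · have hl := hlead 0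
    simp only [hp, hc0, c, hP.one, eval_add, eval_mul, eval_C, eval_X,
      heunAccessory_eq e1 e2 e3 a x, heunSlope, heunShift, heunMid]
    field_simp
    ring
  · have hl := hlead (m + 1)
    simp only [hp, c, hP.succ_succ m, eval_add, eval_sub, eval_mul, eval_C, eval_X,
      heunAccessory_eq e1 e2 e3 a x, heunSlope, heunShift, heunCoupling]
    field_simp
    ring

theorem heunPotential_gauge {b : Fin 4 → ℝ} (hab : ∀ i, b i = a i ∨ b i = 1 / 2 - a i)
    {c : Fin 3 → ℝ} (hc : ∀ i, c i = b i.succ - a i.succ) (x : ℝ) :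
    nodal univ (heunNode e1 e2 e3) * (heunPotential e1 e2 e3 a x - heunPotential e1 e2 e3 b x +
        derivative (polarNumerator (heunNode e1 e2 e3) c)) =
      polarNumerator (heunNode e1 e2 e3) (1 - heunGamma a - c) *
        polarNumerator (heunNode e1 e2 e3) c := by
  have h (i : Fin 4) : (b i - a i) * (b i + a i - 1 / 2) = 0 := by
    rcases hab i with h | h <;> rw [h] <;> ring
  refine Polynomial.funext fun y ↦ ?_
  simp only [nodal_heunNode, polarNumerator_heunNode, heunPotential, heunAlpha, heunBeta,
    heunAccessory, heunQE, heunGamma, hc, Pi.sub_apply, Pi.one_apply, Fin.reduceSucc,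
    derivative_add, derivative_mul, derivative_sub, derivative_X, derivative_C, eval_add, eval_sub,
    eval_mul, eval_C, eval_X, eval_one, eval_zero]
  set A := e1 - e3
  set B := e2 - e3
  linear_combination y * (y - A) * (y - B) * (y + e3) * h 0 +
    (y * (y - A) * (y - B) * (e2 - y) + (y * (y - B)) ^ 2) * h 1 +
    (y * (y - A) * (y - B) * (e1 - y) + (y * (y - A)) ^ 2) * h 2 +
    (y * (y - A) * (y - B) * (e1 + e2 - e3 - y) + ((y - A) * (y - B)) ^ 2) * h 3

theorem heunNode_injective (h13 : e3 < e1) (h32 : e2 < e3) :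
    Function.Injective (heunNode e1 e2 e3) := by
  intro i j hij
  fin_cases i <;> fin_cases j <;> simp [heunNode] at hij ⊢ <;> linarith

end Heun

section HeunDisjoint

variable {e1 e2 e3 : ℝ} {a b : Fin 4 → ℝ} {M N : ℕ}

theorem heunCoeff_eval_ne_zero_of_eval_eq_zero (h13 : e3 < e1) (h32 : e2 < e3)
    (hγa : 0 < heunGamma a 2) (hγb : 0 < heunGamma b 2) (hαa : heunAlpha a = -M)
    (hαb : heunAlpha b = -N) (hab : ∀ i, b i = a i ∨ b i = 1 / 2 - a i)
    (hint : ∀ (i : Fin 3) (n : ℤ), 1 / 2 - 2 * a i.succ ≠ n) {i j : Fin 3}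
    (hi : b i.succ = a i.succ) (hj : b j.succ = 1 / 2 - a j.succ) {x : ℝ}
    (hx : (heunCoeff e1 e2 e3 a (M + 1)).eval x = 0) :
    (heunCoeff e1 e2 e3 b (N + 1)).eval x ≠ 0 := by
  intro hx'
  obtain ⟨p, hp0, hp⟩ := exists_solvesFuchsian_of_heunCoeff_eval_eq_zero
    (fun m ↦ (heunLead_neg h13 h32 hγa m).ne) hαa hx
  obtain ⟨q, hq0, hq⟩ := exists_solvesFuchsian_of_heunCoeff_eval_eq_zero
    (fun m ↦ (heunLead_neg h13 h32 hγb m).ne) hαb hx'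
  let c (k : Fin 3) : ℝ := b k.succ - a k.succ
  have hγ : heunGamma b = heunGamma a + 2 • c := by
    ext k
    change 2 * b k.succ + 1 / 2 = 2 * a k.succ + 1 / 2 + 2 • (b k.succ - a k.succ)
    rw [two_nsmul]
    ring
  rcases forall_exponent_integral (heunNode_injective h13 h32) hp0 hq0 hp (hγ ▸ hq)
    (heunPotential_gauge hab (fun _ ↦ rfl) x) with h | h
  · obtain ⟨n, hn⟩ := h j
    exact hint j n (by rw [← hn]; simp only [hj]; ring)
  · obtain ⟨n, hn⟩ := h i
    exact hint i n (by rw [← hn]; simp only [hi, heunGamma]; ring)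

end HeunDisjoint

section SpectralFactors

/-- Twice the exponents of a spectral factor: at a singular point the two admissible exponents are
`-l i / 2` and `(l i + 1) / 2`, and `S` is the set of points where the second one is taken. -/
def doubleExponent (l : Fin 4 → ℕ) (S : Finset (Fin 4)) (i : Fin 4) : ℤ :=
  if i ∈ S then l i + 1 else -l i

/-- The exponents `ã i` of the spectral factor that takes `(l i + 1) / 2` exactly at the singular
points in `S`. -/
noncomputable def spectralExponent (l : Fin 4 → ℕ) (S : Finset (Fin 4)) (i : Fin 4) : ℝ :=
  doubleExponent l S i / 2

/-- `f` is `1` or the polynomial `P` with exponents `spectralExponent l S`. The last clause encodes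
`N = 0 ∨ 0 < β`, under which the Heun recurrence has positive coupling constants: `α = -N` gives
`β = 1 / 2 - N - 2 * ã 0`, which is positive for `ã 0 = -l 0 / 2` and `N ≤ l 0`. -/
def IsSpectralFactor (e1 e2 e3 : ℝ) (l : Fin 4 → ℕ) (S : Finset (Fin 4)) (f : ℝ[X]) : Prop :=
  f = 1 ∨ ∃ N : ℕ,
    f = specP e1 e2 e3 (spectralExponent l S 0) (spectralExponent l S 1) (spectralExponent l S 2)
      (spectralExponent l S 3) N ∧
    ∑ i, doubleExponent l S i = -2 * N ∧ (N = 0 ∨ 0 ∉ S ∧ N ≤ l 0)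

variable {e1 e2 e3 : ℝ} {l : Fin 4 → ℕ} {S T : Finset (Fin 4)} {N : ℕ} {f g : ℝ[X]}

theorem heunAlpha_spectralExponent (h : ∑ i, doubleExponent l S i = -2 * N) :
    heunAlpha (spectralExponent l S) = -N := by
  have hcast : (∑ i, (doubleExponent l S i : ℝ)) = -2 * N := by exact_mod_cast h
  rw [Fin.sum_univ_four] at hcast
  simp only [heunAlpha, spectralExponent]
  linarith

theorem heunBeta_spectralExponent_pos (h : ∑ i, doubleExponent l S i = -2 * N) (h0 : 0 ∉ S)
    (hN : N ≤ l 0) : 0 < heunBeta (spectralExponent l S) := by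
  have hα := heunAlpha_spectralExponent h
  have ha0 : spectralExponent l S 0 = -(l 0 : ℝ) / 2 := by
    simp [spectralExponent, doubleExponent, h0]
  have hN' : (N : ℝ) ≤ l 0 := Nat.cast_le.2 hN
  rw [heunAlpha] at hα
  rw [heunBeta]
  linarith

theorem heunGamma_spectralExponent_pos (hl3 : l 3 = 0) :
    0 < heunGamma (spectralExponent l S) 2 := by
  simp only [heunGamma, spectralExponent, doubleExponent, Fin.reduceSucc, hl3]
  split_ifs <;> norm_num

theorem spectralExponent_of_mem_iff {i : Fin 4} (h : i ∈ T ↔ i ∈ S) :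
    spectralExponent l T i = spectralExponent l S i := by
  simp only [spectralExponent, doubleExponent, h]

theorem spectralExponent_of_not_mem_iff {i : Fin 4} (h : ¬(i ∈ T ↔ i ∈ S)) :
    spectralExponent l T i = 1 / 2 - spectralExponent l S i := by
  by_cases hT : i ∈ T <;> by_cases hS : i ∈ S <;>
    simp only [spectralExponent, doubleExponent, hT, hS, not_true_eq_false, if_true,
      if_false] at h ⊢
  all_goals
    push_cast
    ring

theorem half_sub_two_mul_spectralExponent_ne (i : Fin 4) (n : ℤ) :
    1 / 2 - 2 * spectralExponent l S i ≠ n := by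
  intro h
  have hcast : (1 : ℝ) = 2 * (n + doubleExponent l S i) := by
    rw [spectralExponent] at h
    linarith
  have hint : (1 : ℤ) = 2 * (n + doubleExponent l S i) := by exact_mod_cast hcast
  omega

theorem IsSpectralFactor.eq_one_or (hl3 : l 3 = 0) (h13 : e3 < e1) (h32 : e2 < e3)
    (hf : IsSpectralFactor e1 e2 e3 l S f) :
    f = 1 ∨ ∃ N : ℕ, heunAlpha (spectralExponent l S) = -N ∧
      (heunCoeff e1 e2 e3 (spectralExponent l S) (N + 1)).Splits ∧
      (heunCoeff e1 e2 e3 (spectralExponent l S) (N + 1)).Separable ∧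
      ∃ u : ℝ, IsUnit u ∧ f = C u * heunCoeff e1 e2 e3 (spectralExponent l S) (N + 1) := by
  refine hf.imp_right ?_
  rintro ⟨N, rfl, hsum, hN⟩
  have hγ := heunGamma_spectralExponent_pos (S := S) hl3
  have hα := heunAlpha_spectralExponent hsum
  have hβ := hN.imp_right fun h ↦ heunBeta_spectralExponent_pos hsum h.1 h.2
  have hsep := heunCoeff_succ_separable h13 h32 hγ hα hβ
  exact ⟨N, hα, heunCoeff_succ_splits h13 h32 hγ hα hβ, hsep, _,
    (inv_ne_zero (leadingCoeff_ne_zero.2 hsep.ne_zero)).isUnit, rfl⟩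

theorem IsSpectralFactor.splits (hl3 : l 3 = 0) (h13 : e3 < e1) (h32 : e2 < e3)
    (hf : IsSpectralFactor e1 e2 e3 l S f) : f.Splits := by
  rcases hf.eq_one_or hl3 h13 h32 with rfl | ⟨N, -, hsplit, -, u, -, rfl⟩
  · exact Splits.one
  · exact hsplit.C_mul u

theorem IsSpectralFactor.separable (hl3 : l 3 = 0) (h13 : e3 < e1) (h32 : e2 < e3)
    (hf : IsSpectralFactor e1 e2 e3 l S f) : f.Separable := by
  rcases hf.eq_one_or hl3 h13 h32 with rfl | ⟨N, -, -, hsep, u, hu, rfl⟩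
  · exact separable_one
  · exact hsep.unit_mul (isUnit_C.2 hu)

theorem IsSpectralFactor.isCoprime (hl3 : l 3 = 0) (h13 : e3 < e1) (h32 : e2 < e3)
    (hf : IsSpectralFactor e1 e2 e3 l S f) (hg : IsSpectralFactor e1 e2 e3 l T g)
    (hagree : ∃ i : Fin 3, i.succ ∈ T ↔ i.succ ∈ S)
    (hdiffer : ∃ j : Fin 3, ¬(j.succ ∈ T ↔ j.succ ∈ S)) : IsCoprime f g := by
  rcases hf.eq_one_or hl3 h13 h32 with rfl | ⟨M, hαM, hsplit, hsep, u, hu, rfl⟩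
  · exact isCoprime_one_left
  rcases hg.eq_one_or hl3 h13 h32 with rfl | ⟨N, hαN, -, -, v, hv, rfl⟩
  · exact isCoprime_one_right
  obtain ⟨i, hi⟩ := hagree
  obtain ⟨j, hj⟩ := hdiffer
  rw [isCoprime_mul_unit_left_left (isUnit_C.2 hu), isCoprime_mul_unit_left_right (isUnit_C.2 hv)]
  exact isCoprime_of_splits hsplit hsep.ne_zero fun x hx ↦
    heunCoeff_eval_ne_zero_of_eval_eq_zero h13 h32 (heunGamma_spectralExponent_pos hl3)
      (heunGamma_spectralExponent_pos hl3) hαM hαN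
      (fun k ↦ (em (k ∈ T ↔ k ∈ S)).imp spectralExponent_of_mem_iff spectralExponent_of_not_mem_iff)
      (fun k n ↦ half_sub_two_mul_spectralExponent_ne k.succ n)
      (spectralExponent_of_mem_iff hi) (spectralExponent_of_not_mem_iff hj) hx

/-- The singular points at which the four factors of the spectral polynomial take the exponent
`(l i + 1) / 2`, when `l 3 = 0` and `l 1 + l 2 ≤ l 0 + 1`. -/
def switchedPoints (l : Fin 4 → ℕ) : Fin 4 → Finset (Fin 4) :=
  if (l 0 + l 1 + l 2 + l 3) % 2 = 0 then ![∅, {2, 3}, {1, 3}, {1, 2}]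
  else ![if l 0 < l 1 + l 2 + l 3 then {0} else {1, 2, 3}, {1}, {2}, {3}]

/-- The four factors of the spectral polynomial as a family. -/
noncomputable def spectralFactor (e1 e2 e3 : ℝ) (l : Fin 4 → ℕ) : Fin 4 → ℝ[X] :=
  ![specP0 e1 e2 e3 (l 0) (l 1) (l 2) (l 3), specP1 e1 e2 e3 (l 0) (l 1) (l 2) (l 3),
    specP2 e1 e2 e3 (l 0) (l 1) (l 2) (l 3), specP3 e1 e2 e3 (l 0) (l 1) (l 2) (l 3)]

theorem prod_spectralFactor (e1 e2 e3 : ℝ) (l : Fin 4 → ℕ) :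
    ∏ i, spectralFactor e1 e2 e3 l i = specQ e1 e2 e3 (l 0) (l 1) (l 2) (l 3) :=
  Fin.prod_univ_four _

theorem isSpectralFactor_specP {a0 a1 a2 a3 : ℝ}
    (ha : ∀ i, ![a0, a1, a2, a3] i = spectralExponent l S i)
    (hsum : ∑ i, doubleExponent l S i = -2 * N) (hN : N = 0 ∨ 0 ∉ S ∧ N ≤ l 0) :
    IsSpectralFactor e1 e2 e3 l S (specP e1 e2 e3 a0 a1 a2 a3 N) :=
  .inr ⟨N, by simp only [← ha]; rfl, hsum, hN⟩

theorem isSpectralFactor_spectralFactor (hl3 : l 3 = 0) (hl : l 1 + l 2 ≤ l 0 + 1) (i : Fin 4) :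
    IsSpectralFactor e1 e2 e3 l (switchedPoints l i) (spectralFactor e1 e2 e3 l i) := by
  fin_cases i <;>
    simp only [switchedPoints, spectralFactor, ite_apply, Matrix.cons_val, Fin.reduceFinMk,
      Fin.zero_eta, Fin.mk_one, specP0, specP1, specP2, specP3] <;>
    split_ifs
  all_goals first
    | exact .inl rfl
    | omega
    | exact isSpectralFactor_specP
        (by simp [Fin.forall_fin_succ, spectralExponent, doubleExponent])
        (by simp [Fin.sum_univ_four, doubleExponent]; omega) (by simp; omega)

theorem exists_mem_switchedPoints_iff {i j : Fin 4} (hij : i ≠ j) :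
    ∃ k : Fin 3, k.succ ∈ switchedPoints l j ↔ k.succ ∈ switchedPoints l i := by
  unfold switchedPoints
  split_ifs <;> decide +revert

theorem exists_not_mem_switchedPoints_iff {i j : Fin 4} (hij : i ≠ j) :
    ∃ k : Fin 3, ¬(k.succ ∈ switchedPoints l j ↔ k.succ ∈ switchedPoints l i) := by
  unfold switchedPoints
  split_ifs <;> decide +revert

theorem prod_spectralFactor_splits (hl3 : l 3 = 0) (hl : l 1 + l 2 ≤ l 0 + 1) (h13 : e3 < e1)
    (h32 : e2 < e3) : (∏ i, spectralFactor e1 e2 e3 l i).Splits :=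
  Splits.prod fun i _ ↦ (isSpectralFactor_spectralFactor hl3 hl i).splits hl3 h13 h32

theorem prod_spectralFactor_separable (hl3 : l 3 = 0) (hl : l 1 + l 2 ≤ l 0 + 1) (h13 : e3 < e1)
    (h32 : e2 < e3) : (∏ i, spectralFactor e1 e2 e3 l i).Separable :=
  separable_prod
    (fun i j hij ↦ (isSpectralFactor_spectralFactor hl3 hl i).isCoprime hl3 h13 h32
      (isSpectralFactor_spectralFactor hl3 hl j) (exists_mem_switchedPoints_iff hij)
      (exists_not_mem_switchedPoints_iff hij))
    fun i ↦ (isSpectralFactor_spectralFactor hl3 hl i).separable hl3 h13 h32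

end SpectralFactors

theorem specQ_real_distinct_roots_case1_general (l0 l1 l2 l3 : ℕ) (hl3 : l3 = 0)
    (hl : l1 + l2 ≤ l0 + 1) (e1 e2 e3 : ℝ) (h13 : e3 < e1) (h32 : e2 < e3) :
    (specQ e1 e2 e3 l0 l1 l2 l3).Splits ∧ (specQ e1 e2 e3 l0 l1 l2 l3).Separable := by
  have hprod := prod_spectralFactor e1 e2 e3 ![l0, l1, l2, l3]
  simp only [Matrix.cons_val] at hprod
  rw [← hprod]
  exact ⟨prod_spectralFactor_splits hl3 hl h13 h32, prod_spectralFactor_separable hl3 hl h13 h32⟩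

/-- If `l3 = 0` and `l0 ≥ l1 + l2 − 1`, with `e1 > e3 > e2` and
`e1+e2+e3 = 0` (purely imaginary modulus), then all zeros of the spectral polynomial
`Q^{(l0,l1,l2,l3)}` are real and unequal. -/
theorem specQ_real_distinct_roots_case1
    (l0 l1 l2 l3 : ℕ) (hl3 : l3 = 0) (hl : l1 + l2 ≤ l0 + 1)
    (e1 e2 e3 : ℝ) (h13 : e3 < e1) (h32 : e2 < e3) (hsum : e1 + e2 + e3 = 0) :
    (specQ e1 e2 e3 l0 l1 l2 l3).map (algebraMap ℝ ℂ) ≠ 0 ∧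
    ((specQ e1 e2 e3 l0 l1 l2 l3).map (algebraMap ℝ ℂ)).roots.Nodup ∧
    ∀ z ∈ ((specQ e1 e2 e3 l0 l1 l2 l3).map (algebraMap ℝ ℂ)).roots, z.im = 0 := by
  obtain ⟨hsplit, hsep⟩ :=
    specQ_real_distinct_roots_case1_general l0 l1 l2 l3 hl3 hl e1 e2 e3 h13 h32
  exact ⟨hsep.map.ne_zero, nodup_roots hsep.map, fun _ hz ↦ im_eq_zero_of_mem_roots_map hsplit hz⟩
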